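/- arXiv:2508.11874 — 2 statements merged into one kernel-verified Lean document; each statement's English description precedes it below -/
import Mathlib

section
/- (Daskalakis–Mehta–Papadimitriou bound.) Let (R, C) be a bimatrix game with all payoffs in [0,1]. Let i ∈ Δ_m be an arbitrary mixed strategy of the row player, let j ∈ Δ_n be a best response of the column player to i, let k ∈ Δ_m be a best response of the row player to j, and set r_1 = (i + k)/2. Then the profile (r_1, j) is a 1/2-approximate Nash equilibrium: max_{x'∈Δ_m} x'ᵀR j − r_1ᵀR j ≤ 1/2 and max_{y'∈Δ_n} r_1ᵀC y' − r_1ᵀC j ≤ 1/2. -/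
/-!
The payoff `xᵀ M y` is linear in `x`, so the payoff at `r₁ = (i + k)/2` is the average of the
payoffs at `i` and at `k` (`bimatrixPay_midpoint`). Each player is thus best-responding in one
half of the mixture: the row player has no regret from `k` against `j`, and the column player's
`j` has no regret against `i`. In the other half the regret is at most `1`, because payoffs lie
in `[0,1]` (`bimatrixPay_mem_Icc`). Averaging gives regret at most `1/2` for both.
-/

open Finset

/-- Expected payoff `xᵀ M y` in a bimatrix game. -/
noncomputable def bimatrixPay {m n : ℕ} (M : Matrix (Fin m) (Fin n) ℝ)
    (x : Fin m → ℝ) (y : Fin n → ℝ) : ℝ :=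
  ∑ a, ∑ b, x a * M a b * y b

theorem bimatrixPay_midpoint {m n : ℕ} (M : Matrix (Fin m) (Fin n) ℝ)
    (x z : Fin m → ℝ) (y : Fin n → ℝ) :
    bimatrixPay M (fun a => (x a + z a) / 2) y
      = (bimatrixPay M x y + bimatrixPay M z y) / 2 := by
  unfold bimatrixPay
  rw [← Finset.sum_add_distrib, Finset.sum_div]
  refine Finset.sum_congr rfl fun a _ => ?_
  rw [← Finset.sum_add_distrib, Finset.sum_div]
  refine Finset.sum_congr rfl fun b _ => ?_
  ring

theorem bimatrixPay_mem_Icc {m n : ℕ} {M : Matrix (Fin m) (Fin n) ℝ}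
    (hM : ∀ a b, M a b ∈ Set.Icc (0:ℝ) 1)
    {x : Fin m → ℝ} (hx : x ∈ stdSimplex ℝ (Fin m))
    {y : Fin n → ℝ} (hy : y ∈ stdSimplex ℝ (Fin n)) :
    bimatrixPay M x y ∈ Set.Icc (0:ℝ) 1 := by
  unfold bimatrixPay
  constructor
  · exact Finset.sum_nonneg fun a _ => Finset.sum_nonneg fun b _ =>
      mul_nonneg (mul_nonneg (hx.1 a) (hM a b).1) (hy.1 b)
  · calc ∑ a, ∑ b, x a * M a b * y b ≤ ∑ a, ∑ b, x a * y b :=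
          Finset.sum_le_sum fun a _ => Finset.sum_le_sum fun b _ =>
            mul_le_mul_of_nonneg_right (mul_le_of_le_one_right (hx.1 a) (hM a b).2) (hy.1 b)
      _ = 1 := by rw [← Finset.sum_mul_sum, hx.2, hy.2, one_mul]

/-- Daskalakis–Mehta–Papadimitriou: if `j` is a best response of the column player to an
arbitrary `i`, `k` is a best response of the row player to `j`, and `r₁ = (i+k)/2`, then
`(r₁, j)` is a `1/2`-approximate Nash equilibrium. -/
theorem stmt9 {m n : ℕ} (R C : Matrix (Fin m) (Fin n) ℝ)
    (hR : ∀ a b, R a b ∈ Set.Icc (0:ℝ) 1) (hC : ∀ a b, C a b ∈ Set.Icc (0:ℝ) 1)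
    (i : Fin m → ℝ) (hi : i ∈ stdSimplex ℝ (Fin m))
    (j : Fin n → ℝ) (hj : j ∈ stdSimplex ℝ (Fin n))
    (hjBR : ∀ y' ∈ stdSimplex ℝ (Fin n), bimatrixPay C i y' ≤ bimatrixPay C i j)
    (k : Fin m → ℝ) (hk : k ∈ stdSimplex ℝ (Fin m))
    (hkBR : ∀ x' ∈ stdSimplex ℝ (Fin m), bimatrixPay R x' j ≤ bimatrixPay R k j) :
    (∀ x' ∈ stdSimplex ℝ (Fin m),
      bimatrixPay R x' j - bimatrixPay R (fun a => (i a + k a) / 2) j ≤ 1/2) ∧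
    (∀ y' ∈ stdSimplex ℝ (Fin n),
      bimatrixPay C (fun a => (i a + k a) / 2) y'
        - bimatrixPay C (fun a => (i a + k a) / 2) j ≤ 1/2) := by
  constructor
  · intro x' hx'
    rw [bimatrixPay_midpoint]
    linarith [hkBR x' hx', (bimatrixPay_mem_Icc hR hi hj).1, (bimatrixPay_mem_Icc hR hk hj).2]
  · intro y' hy'
    rw [bimatrixPay_midpoint, bimatrixPay_midpoint]
    linarith [hjBR y' hy', (bimatrixPay_mem_Icc hC hk hy').2, (bimatrixPay_mem_Icc hC hk hj).1]
end

section
/- (Kontogiannis–Panagopoulou–Spirakis bound.) Let (R, C) be a bimatrix game with all payoffs in [0,1]. Let i ∈ Δ_m and j ∈ Δ_n be arbitrary mixed strategies, let k ∈ Δ_m be a best response of the row player to j, and let l ∈ Δ_n be a best response of the column player to i. Then the profile ((i + k)/2, (j + l)/2) is a 3/4-approximate Nash equilibrium: max_{x'∈Δ_m} x'ᵀR((j+l)/2) − ((i+k)/2)ᵀR((j+l)/2) ≤ 3/4 and max_{y'∈Δ_n} ((i+k)/2)ᵀC y' − ((i+k)/2)ᵀC((j+l)/2) ≤ 3/4.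 -/
/-!
Against `(j + l)/2` any row deviation earns at most `½ (kᵀRj) + ½`, since `k` is a best response
to `j` and payoffs are at most `1`. The profile itself contains the pair `(k, j)` with weight `¼`,
so nonnegativity of payoffs gives the row player at least `¼ (kᵀRj)`. The regret is therefore at
most `½ + ¼ (kᵀRj) ≤ ¾`. The column player's bound is symmetric, through the pair `(i, l)`.
The two ingredients are bilinearity of `bimatrixPay` under midpoints and `bimatrixPay ∈ [0,1]`.
-/

open Finset

theorem bimatrixPay_mid_left {m n : ℕ} (M : Matrix (Fin m) (Fin n) ℝ)
    (x x' : Fin m → ℝ) (y : Fin n → ℝ) :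
    bimatrixPay M (fun a => (x a + x' a) / 2) y
      = (bimatrixPay M x y + bimatrixPay M x' y) / 2 := by
  simp only [bimatrixPay, ← Finset.sum_add_distrib, Finset.sum_div]
  exact Finset.sum_congr rfl fun a _ => Finset.sum_congr rfl fun b _ => by ring

theorem bimatrixPay_mid_right {m n : ℕ} (M : Matrix (Fin m) (Fin n) ℝ)
    (x : Fin m → ℝ) (y y' : Fin n → ℝ) :
    bimatrixPay M x (fun b => (y b + y' b) / 2)
      = (bimatrixPay M x y + bimatrixPay M x y') / 2 := by
  simp only [bimatrixPay, ← Finset.sum_add_distrib, Finset.sum_div]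
  exact Finset.sum_congr rfl fun a _ => Finset.sum_congr rfl fun b _ => by ring

/-- Kontogiannis–Panagopoulou–Spirakis: for arbitrary `i, j`, if `k` is a best response of
the row player to `j` and `l` a best response of the column player to `i`, then
`((i+k)/2, (j+l)/2)` is a `3/4`-approximate Nash equilibrium. -/
theorem stmt10 {m n : ℕ} (R C : Matrix (Fin m) (Fin n) ℝ)
    (hR : ∀ a b, R a b ∈ Set.Icc (0:ℝ) 1) (hC : ∀ a b, C a b ∈ Set.Icc (0:ℝ) 1)
    (i : Fin m → ℝ) (hi : i ∈ stdSimplex ℝ (Fin m))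
    (j : Fin n → ℝ) (hj : j ∈ stdSimplex ℝ (Fin n))
    (k : Fin m → ℝ) (hk : k ∈ stdSimplex ℝ (Fin m))
    (hkBR : ∀ x' ∈ stdSimplex ℝ (Fin m), bimatrixPay R x' j ≤ bimatrixPay R k j)
    (l : Fin n → ℝ) (hl : l ∈ stdSimplex ℝ (Fin n))
    (hlBR : ∀ y' ∈ stdSimplex ℝ (Fin n), bimatrixPay C i y' ≤ bimatrixPay C i l) :
    (∀ x' ∈ stdSimplex ℝ (Fin m),
      bimatrixPay R x' (fun b => (j b + l b) / 2)
        - bimatrixPay R (fun a => (i a + k a) / 2) (fun b => (j b + l b) / 2) ≤ 3/4) ∧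
    (∀ y' ∈ stdSimplex ℝ (Fin n),
      bimatrixPay C (fun a => (i a + k a) / 2) y'
        - bimatrixPay C (fun a => (i a + k a) / 2) (fun b => (j b + l b) / 2) ≤ 3/4) := by
  simp only [bimatrixPay_mid_left, bimatrixPay_mid_right]
  constructor
  · intro x' hx'
    have h₁ := hkBR x' hx'
    have h₂ := (bimatrixPay_mem_Icc hR hx' hl).2
    have h₃ := (bimatrixPay_mem_Icc hR hi hj).1
    have h₄ := (bimatrixPay_mem_Icc hR hi hl).1
    have h₅ := (bimatrixPay_mem_Icc hR hk hl).1
    have h₆ := (bimatrixPay_mem_Icc hR hk hj).2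
    linarith
  · intro y' hy'
    have h₁ := hlBR y' hy'
    have h₂ := (bimatrixPay_mem_Icc hC hk hy').2
    have h₃ := (bimatrixPay_mem_Icc hC hi hj).1
    have h₄ := (bimatrixPay_mem_Icc hC hk hj).1
    have h₅ := (bimatrixPay_mem_Icc hC hk hl).1
    have h₆ := (bimatrixPay_mem_Icc hC hi hl).2
    linarith
end
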